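/- There is a constant C > 0 such that for all integers m, d ≥ 2 with m ≥ d, the expected star discrepancy of a jittered sampling point set P of N = m^d points in [0,1)^d satisfies E[D*(P)] ≥ C · √(d·m^d) · √((1 + log(m/d))/(m/d)). -/

import Mathlib

open MeasureTheory ProbabilityTheory Real

noncomputable section

/-- The axis-aligned cube `∏_i [x_i/m, x_i/m + 1/m)` of the `m`-grid partition of `[0,1)^d`. -/
def jitterCube (m d : ℕ) (x : Fin d → Fin m) : Set (Fin d → ℝ) :=
  Set.univ.pi fun i => Set.Ico ((x i : ℝ) / m) ((x i : ℝ) / m + 1 / m)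

/-- The distribution of a jittered sampling point configuration: independently, one point
uniformly distributed in each of the `m^d` cubes. -/
def jitterMeasure (m d : ℕ) : Measure ((Fin d → Fin m) → (Fin d → ℝ)) :=
  Measure.pi fun x => ((m : ENNReal) ^ d) • volume.restrict (jitterCube m d x)

open scoped Classical in
/-- Signed (non-normalized) discrepancy `|P ∩ A| - N·λ(A)` with `N = m^d` of a point
configuration `P`. -/
def jdisc (m d : ℕ) (P : (Fin d → Fin m) → (Fin d → ℝ)) (A : Set (Fin d → ℝ)) : ℝ :=
  ((Finset.univ.filter fun x => P x ∈ A).card : ℝ) - (m : ℝ) ^ d * (volume A).toReal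

/-- The anchored box `[0,y) = ∏_i [0, y_i)`. -/
def anchoredBox (d : ℕ) (y : Fin d → ℝ) : Set (Fin d → ℝ) :=
  Set.univ.pi fun i => Set.Ico 0 (y i)

/-- The (non-normalized) star discrepancy `D*(P) = sup_{y ∈ [0,1)^d} |disc([0,y))|`. -/
def starDisc (m d : ℕ) (P : (Fin d → Fin m) → (Fin d → ℝ)) : ℝ :=
  ⨆ y : {y : Fin d → ℝ // ∀ i, y i ∈ Set.Ico (0 : ℝ) 1}, |jdisc m d P (anchoredBox d y.1)|

/-- The expected star discrepancy of a jittered sampling point set of `m^d` points. -/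
def expStarDisc (m d : ℕ) : ℝ :=
  ∫ P, starDisc m d P ∂(jitterMeasure m d)

/-!
The points of distinct cubes are independent, so a box `[0, y)` may be chosen in terms of the points
of some of the cubes without biasing the others, whose contributions to the discrepancy keep mean
zero. Put `M = ⌊m / d⌋` and `A = m - M`. In each direction `i`, consider the `M` layers of cubes
with `i`-th index some `k ≥ A` and all other indices less than `A`. A layer has `n = A ^ (d - 1)`
cubes, and this is at least `m ^ (d - 1) / e`. Count `+1` for each point in the lower half of its
cube and `-1` for each point in the upper half: a layer has a sum of `n` independent random signs,
and with probability at least `1 / 17` one of the `M` independent sums is at least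
`s = √(n (1 + log M) / 200)`. If so, let the box end in the middle of such a layer, and otherwise
let it end at `A / m`. In direction `i` only the chosen layer is cut, so it contributes at least
`s / 2`, or else there is no contribution. The `d` directions involve disjoint sets of cubes, so
their contributions add up to an expected discrepancy of at least `d s / 34`.
-/

section Independence

variable {Ω ι : Type*} {α : ι → Type*} [MeasurableSpace Ω] [∀ i, MeasurableSpace (α i)]
  {μ : Measure Ω} {f : ∀ i, Ω → α i}

theorem indepFun_of_dependsOn {β γ : Type*} [MeasurableSpace β] [MeasurableSpace γ]
    (hind : iIndepFun f μ) (hf : ∀ i, Measurable (f i)) {S T : Finset ι} (hST : Disjoint S T)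
    {Φ : (∀ i, α i) → β} {Ψ : (∀ i, α i) → γ} (hΦ : Measurable Φ) (hΨ : Measurable Ψ)
    (hΦS : DependsOn Φ S) (hΨT : DependsOn Ψ T) :
    IndepFun (fun ω ↦ Φ fun i ↦ f i ω) (fun ω ↦ Ψ fun i ↦ f i ω) μ := by
  classical
  have := hind.isProbabilityMeasure
  obtain ⟨ω₀⟩ := nonempty_of_isProbabilityMeasure μ
  let base : ∀ i, α i := fun i ↦ f i ω₀
  have h := (hind.indepFun_finset S T hST hf).comp
    (hΦ.comp (measurable_updateFinset (x := base))) (hΨ.comp (measurable_updateFinset (x := base)))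
  convert h using 1 <;> funext ω
  · exact hΦS fun i hi ↦ by simp [Function.updateFinset, Finset.mem_coe.1 hi]
  · exact hΨT fun i hi ↦ by simp [Function.updateFinset, Finset.mem_coe.1 hi]

theorem iIndepFun_of_dependsOn {κ : Type*} {β : κ → Type*} [∀ k, MeasurableSpace (β k)]
    (hind : iIndepFun f μ) (hf : ∀ i, Measurable (f i)) {T : κ → Finset ι}
    (hT : Pairwise fun k l ↦ Disjoint (T k) (T l)) {Φ : ∀ k, (∀ i, α i) → β k}
    (hΦ : ∀ k, Measurable (Φ k)) (hΦT : ∀ k, DependsOn (Φ k) (T k)) :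
    iIndepFun (fun k ω ↦ Φ k fun i ↦ f i ω) μ := by
  classical
  have := hind.isProbabilityMeasure
  rw [iIndepFun_iff_measure_inter_preimage_eq_mul]
  intro K B hB
  induction K using Finset.induction_on with
  | empty => simp
  | insert a K ha ih =>
    have hdisj : Disjoint (T a) (K.biUnion T) :=
      Finset.disjoint_biUnion_right _ _ _ |>.2 fun k hk ↦ hT fun h ↦ ha (h ▸ hk)
    have hrest : DependsOn (fun w (k : K) ↦ Φ k w) (K.biUnion T : Finset ι) := fun v w h ↦
      funext fun k ↦ hΦT k fun i hi ↦ h i (Finset.mem_biUnion.2 ⟨k, k.2, hi⟩)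
    have hindep := indepFun_of_dependsOn hind hf hdisj (hΦ a)
      (measurable_pi_lambda _ fun k : K ↦ hΦ k) (hΦT a) hrest
    have hpre : ⋂ k ∈ K, (fun ω ↦ Φ k fun i ↦ f i ω) ⁻¹' B k =
        (fun ω (k : K) ↦ Φ k fun i ↦ f i ω) ⁻¹' Set.univ.pi fun k ↦ B k := by
      ext ω; simp [Set.mem_pi]
    rw [Finset.set_biInter_insert, Finset.prod_insert ha,
      ← ih fun k hk ↦ hB k (Finset.mem_insert_of_mem hk), hpre]
    exact hindep.measure_inter_preimage_eq_mul _ _ (hB a (Finset.mem_insert_self a K))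
      (MeasurableSet.univ_pi fun k ↦ hB k (Finset.mem_insert_of_mem k.2))

end Independence

section Probability

variable {Ω : Type*} [MeasurableSpace Ω] {μ : Measure Ω} [IsProbabilityMeasure μ]

theorem one_sub_pow_le_measureReal_exists_mem {κ : Type*} {β : κ → Type*}
    [∀ k, MeasurableSpace (β k)] {Y : ∀ k, Ω → β k} (hind : iIndepFun Y μ)
    (hY : ∀ k, Measurable (Y k)) {B : ∀ k, Set (β k)} (hB : ∀ k, MeasurableSet (B k))
    {K : Finset κ} {p : ℝ} (hp : ∀ k ∈ K, p ≤ μ.real (Y k ⁻¹' B k)) :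
    1 - (1 - p) ^ K.card ≤ μ.real {ω | ∃ k ∈ K, Y k ω ∈ B k} := by
  have hcompl : {ω | ∃ k ∈ K, Y k ω ∈ B k} = (⋂ k ∈ K, Y k ⁻¹' (B k)ᶜ)ᶜ := by
    ext ω; simp
  have hmeas : MeasurableSet (⋂ k ∈ K, Y k ⁻¹' (B k)ᶜ) :=
    K.measurableSet_biInter fun k _ ↦ hY k (hB k).compl
  rw [hcompl, probReal_compl_eq_one_sub hmeas, Measure.real,
    hind.measure_inter_preimage_eq_mul K fun k _ ↦ (hB k).compl, ENNReal.toReal_prod]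
  rw [← Finset.prod_const]
  gcongr 1 - ?_
  refine Finset.prod_le_prod (fun k _ ↦ ENNReal.toReal_nonneg) fun k hk ↦ ?_
  rw [← Measure.real, Set.preimage_compl, probReal_compl_eq_one_sub (hY k (hB k))]
  linarith [hp k hk]

theorem integral_eq_zero_of_indepFun {β γ E : Type*} [MeasurableSpace β] [MeasurableSpace γ]
    [NormedAddCommGroup E] [NormedSpace ℝ E]
    {X : Ω → β} {Y : Ω → γ} (hX : Measurable X) (hY : Measurable Y) (hXY : IndepFun X Y μ)
    {F : β × γ → E} (hF : StronglyMeasurable F) (hint : Integrable (fun ω ↦ F (X ω, Y ω)) μ)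
    (hzero : ∀ b, ∫ ω, F (b, Y ω) ∂μ = 0) :
    ∫ ω, F (X ω, Y ω) ∂μ = 0 := by
  have hmap := hXY.map_prod_eq_prod_map_map hX.aemeasurable hY.aemeasurable
  have hXYm : AEMeasurable (fun ω ↦ (X ω, Y ω)) μ := (hX.prodMk hY).aemeasurable
  have hint' : Integrable F ((μ.map X).prod (μ.map Y)) := by
    rw [← hmap]
    exact (integrable_map_measure hF.aestronglyMeasurable hXYm).2 hint
  have := Measure.isProbabilityMeasure_map (μ := μ) hX.aemeasurable
  have := Measure.isProbabilityMeasure_map (μ := μ) hY.aemeasurable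
  rw [← integral_map hXYm hF.aestronglyMeasurable, hmap, integral_prod _ hint']
  refine integral_eq_zero_of_ae (.of_forall fun b ↦ ?_)
  exact (integral_map hY.aemeasurable
    (hF.comp_measurable measurable_prodMk_left).aestronglyMeasurable).trans (hzero b)

-- A substitute for the Paley–Zygmund inequality that detects the sign of `u`: the expectation of
-- the left-hand side involves only moments.
theorem add_sq_sub_pow_four_le_indicator (u : ℝ) :
    u + u ^ 2 - u ^ 4 / 6 - 1 / 4 ≤ (Set.Ici (1 / 5)).indicator (fun _ ↦ 4) u := by
  by_cases hu : 1 / 5 ≤ u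
  · rw [Set.indicator_of_mem (Set.mem_Ici.2 hu)]
    nlinarith [sq_nonneg (u ^ 2 - 4), sq_nonneg (u - 2)]
  rw [Set.indicator_of_notMem (by simpa using hu)]
  rcases le_or_gt u 0 with hneg | hpos
  · nlinarith [mul_nonneg (neg_nonneg.2 hneg) (sq_nonneg (u + 3 / 2))]
  · nlinarith [sq_nonneg (u ^ 2)]

theorem one_sixteenth_le_measureReal_of_moments {X : Ω → ℝ} (hX : MemLp X 4 μ)
    (hmean : ∫ ω, X ω ∂μ = 0) (hsq : 1 ≤ ∫ ω, X ω ^ 2 ∂μ) (hfour : ∫ ω, X ω ^ 4 ∂μ ≤ 3) :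
    1 / 16 ≤ μ.real {ω | 1 / 5 ≤ X ω} := by
  have h1 : Integrable X μ := hX.integrable (by norm_num)
  have h2 : Integrable (fun ω ↦ X ω ^ 2) μ := (hX.mono_exponent (by norm_num)).integrable_sq
  have h4 : Integrable (fun ω ↦ X ω ^ 4) μ := by
    simpa [(show Even 4 by decide).pow_abs] using hX.integrable_norm_pow (p := 4) (by norm_num)
  have h12 : Integrable (fun ω ↦ X ω + X ω ^ 2) μ := h1.add h2
  have h124 : Integrable (fun ω ↦ X ω + X ω ^ 2 - X ω ^ 4 / 6) μ := h12.sub (h4.div_const 6)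
  have hset : NullMeasurableSet {ω | 1 / 5 ≤ X ω} μ :=
    nullMeasurableSet_le aemeasurable_const hX.aemeasurable
  have hind : ∫ ω, {ω | 1 / 5 ≤ X ω}.indicator (fun _ ↦ (4 : ℝ)) ω ∂μ =
      4 * μ.real {ω | 1 / 5 ≤ X ω} := by
    rw [integral_indicator₀ hset, setIntegral_const, smul_eq_mul, mul_comm]
  have hpoly : ∫ ω, (X ω + X ω ^ 2 - X ω ^ 4 / 6 - 1 / 4) ∂μ =
      ∫ ω, X ω ∂μ + ∫ ω, X ω ^ 2 ∂μ - (∫ ω, X ω ^ 4 ∂μ) / 6 - 1 / 4 := by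
    rw [integral_sub h124 (integrable_const _), integral_sub h12 (h4.div_const 6),
      integral_add h1 h2, integral_div]
    simp
  have hle := integral_mono (h124.sub (integrable_const (1 / 4)))
    ((integrable_const (4 : ℝ)).indicator₀ hset) fun ω ↦ add_sq_sub_pow_four_le_indicator (X ω)
  simp only [Pi.sub_apply] at hle
  rw [hind, hpoly] at hle
  linarith

end Probability

section Rademacher

variable {Ω ι : Type*} [MeasurableSpace Ω] {μ : Measure Ω} {ξ : ι → Ω → ℝ}

/-- A Rademacher family: independent, uniformly random signs. The values are required to be `±1`
everywhere and not only almost everywhere, and uniformity is expressed by the vanishing mean. -/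
structure IsRademacherFamily (ξ : ι → Ω → ℝ) (μ : Measure Ω) : Prop where
  measurable : ∀ i, Measurable (ξ i)
  indep : iIndepFun ξ μ
  sq_eq_one : ∀ i ω, ξ i ω ^ 2 = 1
  integral_eq_zero : ∀ i, ∫ ω, ξ i ω ∂μ = 0

namespace IsRademacherFamily

theorem measurable_sum (hξ : IsRademacherFamily ξ μ) (T : Finset ι) :
    Measurable fun ω ↦ ∑ i ∈ T, ξ i ω :=
  Finset.measurable_fun_sum T fun i _ ↦ hξ.measurable i

theorem abs_eq_one (hξ : IsRademacherFamily ξ μ) (i : ι) (ω : Ω) : |ξ i ω| = 1 :=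
  (pow_eq_one_iff_of_nonneg (abs_nonneg _) two_ne_zero).1 (by rw [sq_abs, hξ.sq_eq_one])

theorem abs_sum_le (hξ : IsRademacherFamily ξ μ) (T : Finset ι) (ω : Ω) :
    |∑ i ∈ T, ξ i ω| ≤ T.card := by
  simpa [hξ.abs_eq_one] using T.abs_sum_le_sum_abs fun i ↦ ξ i ω

theorem memLp_sum (hξ : IsRademacherFamily ξ μ) (T : Finset ι) (p : ENNReal) :
    MemLp (fun ω ↦ ∑ i ∈ T, ξ i ω) p μ :=
  have := hξ.indep.isProbabilityMeasure
  MemLp.of_bound (hξ.measurable_sum T).aestronglyMeasurable T.card (.of_forall (hξ.abs_sum_le T))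

theorem integrable_sum_pow (hξ : IsRademacherFamily ξ μ) (T : Finset ι) (k : ℕ) :
    Integrable (fun ω ↦ (∑ i ∈ T, ξ i ω) ^ k) μ := by
  have := hξ.indep.isProbabilityMeasure
  refine .of_bound ((hξ.measurable_sum T).pow_const k).aestronglyMeasurable ((T.card : ℝ) ^ k)
    (.of_forall fun ω ↦ ?_)
  rw [norm_pow]
  exact pow_le_pow_left₀ (norm_nonneg _) (hξ.abs_sum_le T ω) k

theorem integrable_sum_pow_mul (hξ : IsRademacherFamily ξ μ) (T : Finset ι) (k : ℕ) (a : ι) :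
    Integrable (fun ω ↦ (∑ i ∈ T, ξ i ω) ^ k * ξ a ω) μ :=
  (hξ.integrable_sum_pow T k).mul_bdd (hξ.measurable a).aestronglyMeasurable
    (.of_forall fun ω ↦ (hξ.abs_eq_one a ω).le)

theorem integral_sum_pow_mul (hξ : IsRademacherFamily ξ μ) {T : Finset ι} {a : ι} (ha : a ∉ T)
    (k : ℕ) : ∫ ω, (∑ i ∈ T, ξ i ω) ^ k * ξ a ω ∂μ = 0 := by
  have hindep : IndepFun (fun ω ↦ (∑ i ∈ T, ξ i ω) ^ k) (ξ a) μ := by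
    simpa [Function.comp_def] using (hξ.indep.indepFun_finsetSum_of_notMem hξ.measurable ha).comp
      (measurable_id.pow_const k) measurable_id
  rw [hindep.integral_fun_mul_eq_mul_integral
    ((hξ.measurable_sum T).pow_const k).aestronglyMeasurable (hξ.measurable a).aestronglyMeasurable,
    hξ.integral_eq_zero, mul_zero]

theorem integral_sum (hξ : IsRademacherFamily ξ μ) (T : Finset ι) :
    ∫ ω, ∑ i ∈ T, ξ i ω ∂μ = 0 := by
  rw [integral_finsetSum T fun i _ ↦ by simpa using hξ.integrable_sum_pow {i} 1]
  simp [hξ.integral_eq_zero]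

theorem integral_sum_sq (hξ : IsRademacherFamily ξ μ) (T : Finset ι) :
    ∫ ω, (∑ i ∈ T, ξ i ω) ^ 2 ∂μ = T.card := by
  classical
  have := hξ.indep.isProbabilityMeasure
  induction T using Finset.induction_on with
  | empty => simp
  | insert a T ha ih =>
    have hexpand (ω : Ω) : (∑ i ∈ insert a T, ξ i ω) ^ 2 =
        (∑ i ∈ T, ξ i ω) ^ 2 + 2 * ((∑ i ∈ T, ξ i ω) ^ 1 * ξ a ω) + 1 := by
      rw [Finset.sum_insert ha]
      linear_combination hξ.sq_eq_one a ω
    have hcross := (hξ.integrable_sum_pow_mul T 1 a).const_mul 2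
    have hsq := hξ.integrable_sum_pow T 2
    simp_rw [hexpand]
    rw [integral_add (hsq.fun_add hcross) (integrable_const _), integral_add hsq hcross,
      integral_const_mul, hξ.integral_sum_pow_mul ha, ih, Finset.card_insert_of_notMem ha]
    simp

theorem integral_sum_pow_four (hξ : IsRademacherFamily ξ μ) (T : Finset ι) :
    ∫ ω, (∑ i ∈ T, ξ i ω) ^ 4 ∂μ = 3 * (T.card : ℝ) ^ 2 - 2 * T.card := by
  classical
  have := hξ.indep.isProbabilityMeasure
  induction T using Finset.induction_on with
  | empty => simp
  | insert a T ha ih =>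
    have hexpand (ω : Ω) : (∑ i ∈ insert a T, ξ i ω) ^ 4 =
        (∑ i ∈ T, ξ i ω) ^ 4 + 4 * ((∑ i ∈ T, ξ i ω) ^ 3 * ξ a ω) + 6 * (∑ i ∈ T, ξ i ω) ^ 2 +
          4 * ((∑ i ∈ T, ξ i ω) ^ 1 * ξ a ω) + 1 := by
      rw [Finset.sum_insert ha]
      linear_combination (ξ a ω ^ 2 + 1 + 4 * (∑ i ∈ T, ξ i ω) * ξ a ω +
        6 * (∑ i ∈ T, ξ i ω) ^ 2) * hξ.sq_eq_one a ω
    have h4 := hξ.integrable_sum_pow T 4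
    have h3 := (hξ.integrable_sum_pow_mul T 3 a).const_mul 4
    have h2 := (hξ.integrable_sum_pow T 2).const_mul 6
    have h1 := (hξ.integrable_sum_pow_mul T 1 a).const_mul 4
    have h43 := h4.fun_add h3
    have h432 := h43.fun_add h2
    simp_rw [hexpand]
    rw [integral_add (h432.fun_add h1) (integrable_const _), integral_add h432 h1,
      integral_add h43 h2, integral_add h4 h3]
    simp only [integral_const_mul, hξ.integral_sum_pow_mul ha, hξ.integral_sum_sq, ih,
      integral_const, probReal_univ, smul_eq_mul, Finset.card_insert_of_notMem ha]
    push_cast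
    ring

theorem one_sixteenth_le_measureReal_sqrt_card_le_sum (hξ : IsRademacherFamily ξ μ)
    (T : Finset ι) : 1 / 16 ≤ μ.real {ω | √T.card / 5 ≤ ∑ i ∈ T, ξ i ω} := by
  have := hξ.indep.isProbabilityMeasure
  rcases T.eq_empty_or_nonempty with rfl | hT
  · norm_num
  have hcard : (0 : ℝ) < T.card := by exact_mod_cast hT.card_pos
  have hsqrt : √(T.card : ℝ) ^ 4 = (T.card : ℝ) ^ 2 := by
    rw [pow_mul _ 2 2, sq_sqrt hcard.le]
  have h := one_sixteenth_le_measureReal_of_moments (X := fun ω ↦ (∑ i ∈ T, ξ i ω) / √T.card)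
    (by simpa only [div_eq_mul_inv] using (hξ.memLp_sum T 4).mul_const _)
    (by rw [integral_div, hξ.integral_sum, zero_div])
    (by simp_rw [div_pow, integral_div, hξ.integral_sum_sq, sq_sqrt hcard.le,
      div_self hcard.ne', le_refl])
    (by
      simp_rw [div_pow, integral_div, hξ.integral_sum_pow_four, hsqrt]
      rw [div_le_iff₀ (by positivity)]
      linarith)
  simpa only [le_div_iff₀ (sqrt_pos.2 hcard), one_div_mul_eq_div] using h

-- Cut `T` into `L` blocks of `q` elements: all block sums are at least `√q / 5` with probability
-- at least `(1/16)^L`.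
theorem pow_le_measureReal_mul_sqrt_le_sum (hξ : IsRademacherFamily ξ μ) {T : Finset ι}
    {L q : ℕ} (hL : 1 ≤ L) (hT : L * q ≤ T.card) :
    (1 / 16 : ℝ) ^ L ≤ μ.real {ω | L * (√q / 5) ≤ ∑ i ∈ T, ξ i ω} := by
  classical
  have := hξ.indep.isProbabilityMeasure
  induction L, hL using Nat.le_induction generalizing T with
  | base =>
    have hq : √(q : ℝ) ≤ √(T.card : ℝ) := sqrt_le_sqrt (by exact_mod_cast (one_mul q ▸ hT))
    rw [pow_one, Nat.cast_one, one_mul]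
    exact (hξ.one_sixteenth_le_measureReal_sqrt_card_le_sum T).trans
      (measureReal_mono fun ω hω ↦ (div_le_div_of_nonneg_right hq (by norm_num)).trans hω)
  | succ L _ ih =>
    obtain ⟨U, hUT, rfl⟩ := Finset.exists_subset_card_eq (s := T) (n := q) (by nlinarith)
    have hcard : L * U.card ≤ (T \ U).card := by
      rw [Finset.card_sdiff_of_subset hUT]
      exact Nat.le_sub_of_add_le (by linarith)
    have hindep : IndepFun (fun ω ↦ ∑ i ∈ U, ξ i ω) (fun ω ↦ ∑ i ∈ T \ U, ξ i ω) μ :=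
      indepFun_of_dependsOn hξ.indep hξ.measurable Finset.disjoint_sdiff
        (Φ := fun w ↦ ∑ i ∈ U, w i) (Ψ := fun w ↦ ∑ i ∈ T \ U, w i) (by fun_prop) (by fun_prop)
        (fun _ _ h ↦ Finset.sum_congr rfl h) (fun _ _ h ↦ Finset.sum_congr rfl h)
    calc (1 / 16 : ℝ) ^ (L + 1)
        ≤ μ.real {ω | √U.card / 5 ≤ ∑ i ∈ U, ξ i ω} *
            μ.real {ω | L * (√U.card / 5) ≤ ∑ i ∈ T \ U, ξ i ω} := by
          rw [pow_succ']
          exact mul_le_mul (hξ.one_sixteenth_le_measureReal_sqrt_card_le_sum U) (ih hcard)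
            (by positivity) measureReal_nonneg
      _ = μ.real ({ω | √U.card / 5 ≤ ∑ i ∈ U, ξ i ω} ∩
            {ω | L * (√U.card / 5) ≤ ∑ i ∈ T \ U, ξ i ω}) := by
          simp only [Measure.real, ← ENNReal.toReal_mul]
          exact congrArg _ (hindep.measure_inter_preimage_eq_mul (Set.Ici _) (Set.Ici _)
            measurableSet_Ici measurableSet_Ici).symm
      _ ≤ μ.real {ω | (L + 1 : ℕ) * (√U.card / 5) ≤ ∑ i ∈ T, ξ i ω} := by
          refine measureReal_mono fun ω ⟨hU, hTU⟩ ↦ ?_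
          simp only [Set.mem_ofPred_eq] at hU hTU ⊢
          rw [← Finset.sum_sdiff hUT]
          push_cast
          linarith

theorem pow_le_measureReal_sqrt_le_sum (hξ : IsRademacherFamily ξ μ) {T : Finset ι} {L n : ℕ}
    (hL : 0 < L) (hLn : L ≤ n) (hn : n ≤ T.card) :
    (1 / 16 : ℝ) ^ L ≤ μ.real {ω | √(L * n / 50) ≤ ∑ i ∈ T, ξ i ω} := by
  have := hξ.indep.isProbabilityMeasure
  have hquot : (n : ℝ) ≤ 2 * L * (n / L : ℕ) := by
    have hlt := Nat.lt_mul_div_succ n hL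
    have hpos := Nat.mul_le_mul_left L (Nat.div_pos hLn hL)
    have : n ≤ 2 * L * (n / L) := by nlinarith
    exact_mod_cast this
  have hthreshold : √(L * n / 50) ≤ L * (√(n / L : ℕ) / 5) := by
    refine sqrt_le_iff.2 ⟨by positivity, ?_⟩
    rw [mul_pow, div_pow, sq_sqrt (Nat.cast_nonneg _)]
    nlinarith [mul_le_mul_of_nonneg_left hquot (Nat.cast_nonneg (α := ℝ) L)]
  exact (hξ.pow_le_measureReal_mul_sqrt_le_sum hL ((Nat.mul_div_le n L).trans hn)).trans
    (measureReal_mono fun ω hω ↦ hthreshold.trans hω)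

end IsRademacherFamily

theorem one_add_log_le_four_mul_log_succ {M : ℕ} (hM : M ≠ 0) :
    1 + log M ≤ 4 * (Nat.log 16 M + 1 : ℕ) := by
  have hlt : (M : ℝ) ≤ 16 ^ (Nat.log 16 M + 1) := by
    exact_mod_cast (Nat.lt_pow_succ_log_self (by norm_num) M).le
  have hlog := log_le_log (by positivity) hlt
  have h16 : log 16 ≤ 3 := by
    rw [show (16 : ℝ) = 2 ^ 4 by norm_num, log_pow]
    push_cast
    linarith [log_two_lt_d9]
  rw [log_pow] at hlog
  have hL : (1 : ℝ) ≤ (Nat.log 16 M + 1 : ℕ) := by simp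
  nlinarith

theorem one_sub_pow_le_of_inv_le {M : ℕ} (hM : M ≠ 0) {p : ℝ} (hp : 1 / (16 * M : ℝ) ≤ p)
    (hp' : p ≤ 1) : (1 - p) ^ M ≤ 16 / 17 := by
  have hbase : 1 - p ≤ exp (-(1 / (16 * M))) := by
    linarith [add_one_le_exp (-(1 / (16 * M : ℝ)))]
  calc (1 - p) ^ M ≤ exp (-(1 / (16 * M))) ^ M := pow_le_pow_left₀ (by linarith) hbase M
    _ = (exp (1 / 16))⁻¹ := by
        rw [← exp_nat_mul, ← exp_neg]
        congr 1
        field_simp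
    _ ≤ 16 / 17 := by
        rw [inv_le_comm₀ (exp_pos _) (by norm_num)]
        linarith [add_one_le_exp (1 / 16 : ℝ)]

-- With `L = ⌊log₁₆ #K⌋ + 1` blocks, each sum is large with probability at least `1 / (16 * #K)`.
theorem IsRademacherFamily.one_seventeenth_le_measureReal_exists_sqrt_le_sum {κ : Type*}
    (hξ : IsRademacherFamily ξ μ) {T : κ → Finset ι}
    (hT : Pairwise fun k l ↦ Disjoint (T k) (T l)) {K : Finset κ} (hK : K.Nonempty) {n : ℕ}
    (hn : ∀ k ∈ K, n ≤ (T k).card) (hlog : Nat.log 16 K.card < n) :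
    1 / 17 ≤ μ.real {ω | ∃ k ∈ K, √(n * (1 + log K.card) / 200) ≤ ∑ i ∈ T k, ξ i ω} := by
  have := hξ.indep.isProbabilityMeasure
  set L := Nat.log 16 K.card + 1
  have hindep : iIndepFun (fun k ω ↦ ∑ i ∈ T k, ξ i ω) μ :=
    iIndepFun_of_dependsOn hξ.indep hξ.measurable hT (Φ := fun k w ↦ ∑ i ∈ T k, w i)
      (fun k ↦ by fun_prop) (fun k _ _ h ↦ Finset.sum_congr rfl h)
  have hthreshold : √(n * (1 + log K.card) / 200) ≤ √(L * n / 50) := by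
    refine sqrt_le_sqrt ?_
    nlinarith [mul_le_mul_of_nonneg_left (one_add_log_le_four_mul_log_succ hK.card_ne_zero)
      (Nat.cast_nonneg (α := ℝ) n)]
  have hprob : 1 / (16 * K.card : ℝ) ≤ (1 / 16) ^ L := by
    have h16 : (16 : ℝ) ^ Nat.log 16 K.card ≤ K.card := by
      exact_mod_cast Nat.pow_log_le_self 16 hK.card_ne_zero
    rw [one_div_pow, pow_succ']
    gcongr
  have hlayers := one_sub_pow_le_measureReal_exists_mem hindep (fun k ↦ hξ.measurable_sum (T k))
    (B := fun _ ↦ Set.Ici (√(L * n / 50))) (fun _ ↦ measurableSet_Ici) (K := K)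
    (fun k hk ↦ hξ.pow_le_measureReal_sqrt_le_sum (Nat.succ_pos _) hlog (hn k hk))
  have hpow := one_sub_pow_le_of_inv_le hK.card_ne_zero hprob
    (pow_le_one₀ (by norm_num) (by norm_num))
  have hmono : μ.real {ω | ∃ k ∈ K, √(L * n / 50) ≤ ∑ i ∈ T k, ξ i ω} ≤
      μ.real {ω | ∃ k ∈ K, √(n * (1 + log K.card) / 200) ≤ ∑ i ∈ T k, ξ i ω} :=
    measureReal_mono fun _ ↦ .imp fun _ ↦ .imp_right hthreshold.trans
  simp only [Set.mem_Ici] at hlayers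
  linarith

end Rademacher

section Cubes

open Set Function

variable {m d : ℕ}

theorem measurableSet_jitterCube (x : Fin d → Fin m) : MeasurableSet (jitterCube m d x) :=
  .univ_pi fun _ ↦ measurableSet_Ico

theorem measurableSet_anchoredBox (y : Fin d → ℝ) : MeasurableSet (anchoredBox d y) :=
  .univ_pi fun _ ↦ measurableSet_Ico

theorem volume_anchoredBox_ne_top (y : Fin d → ℝ) : volume (anchoredBox d y) ≠ ⊤ := by
  rw [anchoredBox, volume_pi_Ico]
  exact ENNReal.prod_ne_top fun _ _ ↦ ENNReal.ofReal_ne_top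

theorem mem_anchoredBox_iff {y p : Fin d → ℝ} : p ∈ anchoredBox d y ↔ ∀ i, 0 ≤ p i ∧ p i < y i := by
  simp [anchoredBox]

/-- The uniform probability distribution on the grid interval `[k/m, (k+1)/m)`. -/
def cellMeasure (k : Fin m) : Measure ℝ :=
  (m : ENNReal) • volume.restrict (Ico ((k : ℝ) / m) ((k : ℝ) / m + 1 / m))

/-- The uniform probability distribution on the cube `x`, in the form in which it appears as a
factor of `jitterMeasure`. -/
def cubeMeasure (x : Fin d → Fin m) : Measure (Fin d → ℝ) :=
  (m : ENNReal) ^ d • volume.restrict (jitterCube m d x)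

theorem jitterMeasure_eq_pi : jitterMeasure m d = Measure.pi cubeMeasure := rfl

theorem cubeMeasure_real_apply (x : Fin d → Fin m) (B : Set (Fin d → ℝ)) :
    (cubeMeasure x).real B = (m : ℝ) ^ d * volume.real (B ∩ jitterCube m d x) := by
  simp [cubeMeasure, measureReal_ennreal_smul_apply,
    measureReal_restrict_apply' (measurableSet_jitterCube x)]

theorem ae_cubeMeasure_mem_jitterCube (x : Fin d → Fin m) :
    ∀ᵐ p ∂cubeMeasure x, p ∈ jitterCube m d x :=
  Measure.ae_smul_measure (ae_restrict_mem (measurableSet_jitterCube x)) _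

variable [NeZero m]

theorem mem_jitterCube_iff {x : Fin d → Fin m} {p : Fin d → ℝ} :
    p ∈ jitterCube m d x ↔ ∀ i, (x i : ℝ) ≤ m * p i ∧ m * p i < x i + 1 := by
  have hm : (0 : ℝ) < m := by exact_mod_cast NeZero.pos m
  simp only [jitterCube, mem_pi, mem_univ, true_implies, mem_Ico, ← add_div, div_le_iff₀' hm,
    lt_div_iff₀' hm]

theorem mem_jitterCube_iff_floor_eq {x : Fin d → Fin m} {p : Fin d → ℝ} :
    p ∈ jitterCube m d x ↔ ∀ i, ⌊m * p i⌋ = (x i : ℤ) := by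
  simp [mem_jitterCube_iff, Int.floor_eq_iff]

theorem pairwise_disjoint_jitterCube : Pairwise (Disjoint on jitterCube m d) := by
  intro x x' hne
  refine disjoint_left.2 fun p hp hp' ↦ hne (funext fun i ↦ Fin.ext ?_)
  rw [mem_jitterCube_iff_floor_eq] at hp hp'
  exact_mod_cast (hp i).symm.trans (hp' i)

theorem anchoredBox_subset_iUnion_jitterCube {y : Fin d → ℝ} (hy : ∀ i, y i ≤ 1) :
    anchoredBox d y ⊆ ⋃ x, jitterCube m d x := by
  intro p hp
  rw [mem_anchoredBox_iff] at hp
  have hm : (0 : ℝ) < m := by exact_mod_cast NeZero.pos m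
  have hlt (i : Fin d) : ⌊m * p i⌋₊ < m := by
    rw [Nat.floor_lt (mul_nonneg hm.le (hp i).1)]
    nlinarith [(hp i).2, hy i]
  exact mem_iUnion.2 ⟨fun i ↦ ⟨⌊m * p i⌋₊, hlt i⟩, mem_jitterCube_iff.2 fun i ↦
    ⟨Nat.floor_le (mul_nonneg hm.le (hp i).1), Nat.lt_floor_add_one _⟩⟩

theorem sum_cubeMeasure_real_anchoredBox {y : Fin d → ℝ} (hy : ∀ i, y i ≤ 1) :
    ∑ x : Fin d → Fin m, (cubeMeasure x).real (anchoredBox d y) =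
      (m : ℝ) ^ d * volume.real (anchoredBox d y) := by
  have hcover : ⋃ x, anchoredBox d y ∩ jitterCube m d x = anchoredBox d y := by
    rw [← inter_iUnion, inter_eq_left.2 (anchoredBox_subset_iUnion_jitterCube hy)]
  simp_rw [cubeMeasure_real_apply, ← Finset.mul_sum]
  have hdisj : Pairwise (Disjoint on fun x : Fin d → Fin m ↦ anchoredBox d y ∩ jitterCube m d x) :=
    fun _ _ hne ↦ (pairwise_disjoint_jitterCube hne).mono inter_subset_right inter_subset_right
  rw [← measureReal_iUnion_fintype hdisj
    (fun x ↦ (measurableSet_anchoredBox y).inter (measurableSet_jitterCube x))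
    (fun x ↦ measure_ne_top_of_subset inter_subset_left (volume_anchoredBox_ne_top y)), hcover]

theorem cellMeasure_real_setOf_lt (k : Fin m) {t : ℝ} (ht0 : 0 ≤ t) (ht1 : t ≤ 1) :
    (cellMeasure k).real {u | m * u < k + t} = t := by
  have hm : (0 : ℝ) < m := by exact_mod_cast NeZero.pos m
  have hset : {u | m * u < k + t} ∩ Ico ((k : ℝ) / m) ((k : ℝ) / m + 1 / m) =
      Ico ((k : ℝ) / m) ((k + t) / m) := by
    ext u
    have : (k + t) / m ≤ (k : ℝ) / m + 1 / m := by rw [← add_div]; gcongr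
    simp only [mem_inter_iff, mem_ofPred_eq, mem_Ico, ← lt_div_iff₀' hm]
    grind
  rw [cellMeasure, measureReal_ennreal_smul_apply, measureReal_restrict_apply' measurableSet_Ico,
    hset, volume_real_Ico_of_le (by gcongr; linarith)]
  simp
  field_simp
  ring

instance (k : Fin m) : IsProbabilityMeasure (cellMeasure k) := by
  have hm : (m : ENNReal) ≠ 0 := by simp [NeZero.ne m]
  constructor
  rw [cellMeasure, Measure.smul_apply, Measure.restrict_apply_univ, volume_Ico,
    add_sub_cancel_left, one_div, ENNReal.ofReal_inv_of_pos (by exact_mod_cast NeZero.pos m),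
    ENNReal.ofReal_natCast, smul_eq_mul, ENNReal.mul_inv_cancel hm (ENNReal.natCast_ne_top m)]

theorem cubeMeasure_eq_pi (x : Fin d → Fin m) :
    cubeMeasure x = Measure.pi fun i ↦ cellMeasure (x i) := by
  refine (Measure.pi_eq fun s _ ↦ ?_).symm
  rw [cubeMeasure, jitterCube, volume_pi, Measure.restrict_pi_pi, Measure.smul_apply, Measure.pi_pi]
  simp [cellMeasure, Finset.prod_mul_distrib]

instance (x : Fin d → Fin m) : IsProbabilityMeasure (cubeMeasure x) := by
  rw [cubeMeasure_eq_pi]; infer_instance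

instance : IsProbabilityMeasure (jitterMeasure m d) := by
  rw [jitterMeasure_eq_pi]; infer_instance

theorem cubeMeasure_real_setOf_lt (x : Fin d → Fin m) (i : Fin d) {t : ℝ} (ht0 : 0 ≤ t)
    (ht1 : t ≤ 1) : (cubeMeasure x).real {p | m * p i < x i + t} = t := by
  have hmap := measurePreserving_eval (fun j ↦ cellMeasure (x j)) i
  have hset : MeasurableSet {u : ℝ | m * u < x i + t} :=
    measurableSet_lt (by fun_prop) measurable_const
  rw [cubeMeasure_eq_pi]
  exact (hmap.measureReal_preimage hset.nullMeasurableSet).trans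
    (cellMeasure_real_setOf_lt (x i) ht0 ht1)

theorem ae_jitterMeasure_mem_jitterCube :
    ∀ᵐ P ∂jitterMeasure m d, ∀ x, P x ∈ jitterCube m d x := by
  rw [jitterMeasure_eq_pi]
  exact ae_all_iff.2 fun x ↦ (Measure.quasiMeasurePreserving_eval _ x).ae
    (ae_cubeMeasure_mem_jitterCube x)

end Cubes

section StarDiscrepancy

open Set Filter Topology

variable {m d : ℕ}

theorem jdisc_eq_sum_indicator_sub (P : (Fin d → Fin m) → Fin d → ℝ) (B : Set (Fin d → ℝ)) :
    jdisc m d P B = ∑ x, B.indicator 1 (P x) - (m : ℝ) ^ d * volume.real B := by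
  classical
  simp only [jdisc, Measure.real, Finset.card_filter, Nat.cast_sum]
  simp [Set.indicator]

theorem abs_jdisc_anchoredBox_le (P : (Fin d → Fin m) → Fin d → ℝ) {y : Fin d → ℝ}
    (hy : ∀ i, y i ∈ Ico (0 : ℝ) 1) : |jdisc m d P (anchoredBox d y)| ≤ (m : ℝ) ^ d := by
  have hvol : volume.real (anchoredBox d y) ≤ 1 := by
    rw [anchoredBox, Measure.real, volume_pi_Ico_toReal fun i ↦ (hy i).1]
    exact Finset.prod_le_one (by simpa using fun i ↦ (hy i).1) (by simpa using fun i ↦ (hy i).2.le)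
  have hcount : ∑ x, (anchoredBox d y).indicator 1 (P x) ≤ (m : ℝ) ^ d :=
    (Finset.sum_le_sum fun x _ ↦ indicator_le_self' (by simp) (P x)).trans (by simp)
  rw [jdisc_eq_sum_indicator_sub]
  exact abs_sub_le_of_nonneg_of_le
    (Finset.sum_nonneg fun x _ ↦ indicator_nonneg (by simp) _) hcount
    (by positivity) (mul_le_of_le_one_right (by positivity) hvol)

theorem bddAbove_range_abs_jdisc {ι : Type*} (P : (Fin d → Fin m) → Fin d → ℝ)
    (y : ι → Fin d → ℝ) (hy : ∀ k i, y k i ∈ Ico (0 : ℝ) 1) :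
    BddAbove (range fun k ↦ |jdisc m d P (anchoredBox d (y k))|) :=
  ⟨(m : ℝ) ^ d, forall_mem_range.2 fun k ↦ abs_jdisc_anchoredBox_le P (hy k)⟩

theorem abs_jdisc_anchoredBox_le_starDisc (P : (Fin d → Fin m) → Fin d → ℝ) {y : Fin d → ℝ}
    (hy : ∀ i, y i ∈ Ico (0 : ℝ) 1) : |jdisc m d P (anchoredBox d y)| ≤ starDisc m d P :=
  le_ciSup (bddAbove_range_abs_jdisc P (fun y : {y : Fin d → ℝ // ∀ i, y i ∈ Ico (0 : ℝ) 1} ↦ y.1)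
    fun y ↦ y.2) ⟨y, hy⟩

theorem tendsto_jdisc_anchoredBox (P : (Fin d → Fin m) → Fin d → ℝ) {y : Fin d → ℝ}
    (hy : ∀ i, 0 ≤ y i) {v : ℕ → Fin d → ℝ} (hv : ∀ n i, v n i ∈ Icc 0 (y i))
    (hlim : Tendsto v atTop (𝓝 y)) :
    Tendsto (fun n ↦ jdisc m d P (anchoredBox d (v n))) atTop
      (𝓝 (jdisc m d P (anchoredBox d y))) := by
  rw [tendsto_pi_nhds] at hlim
  simp only [jdisc_eq_sum_indicator_sub]
  refine (tendsto_finsetSum _ fun x _ ↦ ?_).sub (.const_mul _ ?_)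
  · refine tendsto_nhds_of_eventually_eq ?_
    by_cases hx : P x ∈ anchoredBox d y
    · have hlt : ∀ᶠ n in atTop, ∀ i, P x i < v n i := eventually_all.2 fun i ↦
        (hlim i).eventually_const_lt (mem_anchoredBox_iff.1 hx i).2
      filter_upwards [hlt] with n hn
      rw [indicator_of_mem hx, indicator_of_mem
        (mem_anchoredBox_iff.2 fun i ↦ ⟨(mem_anchoredBox_iff.1 hx i).1, hn i⟩)]
    · refine .of_forall fun n ↦ ?_
      rw [indicator_of_notMem hx, indicator_of_notMem fun h ↦ hx (mem_anchoredBox_iff.2 fun i ↦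
        (mem_anchoredBox_iff.1 h i).imp_right fun h ↦ h.trans_le (hv n i).2)]
  · simp only [anchoredBox, Measure.real, volume_pi_Ico_toReal (a := fun _ ↦ 0) hy,
      fun n ↦ volume_pi_Ico_toReal (a := fun _ ↦ 0) fun i ↦ (hv n i).1, sub_zero]
    exact tendsto_finsetProd _ fun i _ ↦ hlim i

theorem exists_rat_seq_tendsto_of_nonneg {y : ℝ} (hy : 0 ≤ y) :
    ∃ u : ℕ → ℚ, (∀ n, (u n : ℝ) ∈ Icc 0 y) ∧ Tendsto (fun n ↦ (u n : ℝ)) atTop (𝓝 y) := by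
  obtain ⟨u, -, hlt, hlim⟩ := exists_seq_rat_strictMono_tendsto y
  refine ⟨fun n ↦ max 0 (u n), fun n ↦ by simp [hy, (hlt n).le], ?_⟩
  simpa [hy] using tendsto_const_nhds (x := (0 : ℝ)).max hlim

theorem starDisc_eq_iSup_rat (P : (Fin d → Fin m) → Fin d → ℝ) :
    starDisc m d P = ⨆ q : {q : Fin d → ℚ // ∀ i, (q i : ℝ) ∈ Ico (0 : ℝ) 1},
      |jdisc m d P (anchoredBox d fun i ↦ q.1 i)| := by
  have : Nonempty {q : Fin d → ℚ // ∀ i, (q i : ℝ) ∈ Ico (0 : ℝ) 1} := ⟨⟨fun _ ↦ 0, by simp⟩⟩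
  have : Nonempty {y : Fin d → ℝ // ∀ i, y i ∈ Ico (0 : ℝ) 1} := ⟨⟨fun _ ↦ 0, by simp⟩⟩
  refine le_antisymm (ciSup_le fun ⟨y, hy⟩ ↦ ?_)
    (ciSup_le fun q ↦ abs_jdisc_anchoredBox_le_starDisc P q.2)
  choose u hu hlim using fun i ↦ exists_rat_seq_tendsto_of_nonneg (hy i).1
  have htendsto := (tendsto_jdisc_anchoredBox P (fun i ↦ (hy i).1) (fun n i ↦ hu i n)
    (tendsto_pi_nhds.2 hlim)).abs
  exact le_of_tendsto' htendsto fun n ↦ le_ciSup (bddAbove_range_abs_jdisc P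
    (fun (q : {q : Fin d → ℚ // ∀ i, (q i : ℝ) ∈ Ico (0 : ℝ) 1}) i ↦ (q.1 i : ℝ)) fun q ↦ q.2)
    ⟨fun i ↦ u i n, fun i ↦ ⟨(hu i n).1, (hu i n).2.trans_lt (hy i).2⟩⟩

theorem measurable_starDisc : Measurable (starDisc m d) := by
  simp only [funext starDisc_eq_iSup_rat, jdisc_eq_sum_indicator_sub, ← norm_eq_abs]
  refine .iSup fun q ↦ ((Finset.measurable_fun_sum _ fun x _ ↦ ?_).sub_const _).norm
  exact (measurable_one.indicator (measurableSet_anchoredBox _)).comp (measurable_pi_apply x)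

variable [NeZero m]

theorem integrable_starDisc : Integrable (starDisc m d) (jitterMeasure m d) := by
  have : Nonempty {y : Fin d → ℝ // ∀ i, y i ∈ Ico (0 : ℝ) 1} := ⟨⟨fun _ ↦ 0, by simp⟩⟩
  refine .of_bound measurable_starDisc.aestronglyMeasurable ((m : ℝ) ^ d) (.of_forall fun P ↦ ?_)
  have hnonneg : 0 ≤ starDisc m d P := iSup_nonneg fun _ ↦ abs_nonneg _
  rw [norm_eq_abs, abs_of_nonneg hnonneg]
  exact ciSup_le fun y ↦ abs_jdisc_anchoredBox_le P y.2

/-- The contribution of a point `p` of the cube `x` to the discrepancy of the box `[0, y)`. -/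
def cubeDisc (x : Fin d → Fin m) (y p : Fin d → ℝ) : ℝ :=
  (anchoredBox d y).indicator 1 p - (cubeMeasure x).real (anchoredBox d y)

theorem jdisc_anchoredBox_eq_sum_cubeDisc (P : (Fin d → Fin m) → Fin d → ℝ) {y : Fin d → ℝ}
    (hy : ∀ i, y i ≤ 1) : jdisc m d P (anchoredBox d y) = ∑ x, cubeDisc x y (P x) := by
  simp only [cubeDisc, Finset.sum_sub_distrib, sum_cubeMeasure_real_anchoredBox hy,
    jdisc_eq_sum_indicator_sub]

theorem abs_cubeDisc_le_one (x : Fin d → Fin m) (y p : Fin d → ℝ) : |cubeDisc x y p| ≤ 1 :=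
  abs_sub_le_of_nonneg_of_le (indicator_nonneg (by simp) p) (indicator_le_self' (by simp) p)
    measureReal_nonneg measureReal_le_one

theorem measurable_cubeDisc (x : Fin d → Fin m) :
    Measurable fun q : (Fin d → ℝ) × (Fin d → ℝ) ↦ cubeDisc x q.1 q.2 := by
  have hset : MeasurableSet {q : (Fin d → ℝ) × (Fin d → ℝ) | q.2 ∈ anchoredBox d q.1} := by
    simp only [mem_anchoredBox_iff, ofPred_forall, ofPred_and]
    refine .iInter fun i ↦ .inter (measurableSet_le ?_ ?_) (measurableSet_lt ?_ ?_) <;> fun_prop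
  have hmeasure := (measurable_measure_prodMk_left (ν := cubeMeasure x) hset).ennreal_toReal
  exact (measurable_one.indicator hset).sub (hmeasure.comp measurable_fst)

theorem integral_cubeDisc (x : Fin d → Fin m) (y : Fin d → ℝ) :
    ∫ p, cubeDisc x y p ∂cubeMeasure x = 0 := by
  have hbox := measurableSet_anchoredBox y
  simp only [cubeDisc]
  rw [integral_sub ((integrable_const 1).indicator hbox) (integrable_const _),
    integral_indicator_one hbox]
  simp

theorem integrable_cubeDisc_comp {y : ((Fin d → Fin m) → Fin d → ℝ) → Fin d → ℝ}
    (hy : Measurable y) (x : Fin d → Fin m) :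
    Integrable (fun P ↦ cubeDisc x (y P) (P x)) (jitterMeasure m d) :=
  .of_bound ((measurable_cubeDisc x).comp (hy.prodMk (measurable_pi_apply x))).aestronglyMeasurable
    1 (.of_forall fun P ↦ abs_cubeDisc_le_one x (y P) (P x))

theorem iIndepFun_eval_jitterMeasure : iIndepFun (fun x P ↦ P x) (jitterMeasure m d) := by
  rw [jitterMeasure_eq_pi]
  exact iIndepFun_pi (X := fun _ p ↦ p) fun _ ↦ aemeasurable_id

theorem integral_cubeDisc_comp_eq_zero {y : ((Fin d → Fin m) → Fin d → ℝ) → Fin d → ℝ}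
    (hy : Measurable y) {S : Finset (Fin d → Fin m)} (hyS : DependsOn y S)
    {x : Fin d → Fin m} (hx : x ∉ S) :
    ∫ P, cubeDisc x (y P) (P x) ∂jitterMeasure m d = 0 := by
  have hindep : IndepFun y (fun P ↦ P x) (jitterMeasure m d) :=
    indepFun_of_dependsOn iIndepFun_eval_jitterMeasure measurable_pi_apply
      (Finset.disjoint_singleton_right.2 hx) hy (measurable_pi_apply x) hyS
      fun _ _ h ↦ h x (by simp)
  refine integral_eq_zero_of_indepFun hy (measurable_pi_apply x) hindep
    (measurable_cubeDisc x).stronglyMeasurable (integrable_cubeDisc_comp hy x) fun b ↦ ?_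
  rw [jitterMeasure_eq_pi]
  exact (integral_comp_eval (μ := cubeMeasure) (i := x) (f := cubeDisc x b)
    ((measurable_cubeDisc x).comp measurable_prodMk_left).aestronglyMeasurable).trans
    (integral_cubeDisc x b)

-- Conditionally on the points in `S`, which determine the corner, all other cubes contribute `0`.
theorem integral_sum_cubeDisc_le_expStarDisc {y : ((Fin d → Fin m) → Fin d → ℝ) → Fin d → ℝ}
    (hy : Measurable y) (hy' : ∀ P i, y P i ∈ Ico (0 : ℝ) 1) {S : Finset (Fin d → Fin m)}
    (hyS : DependsOn y S) :
    ∫ P, ∑ x ∈ S, cubeDisc x (y P) (P x) ∂jitterMeasure m d ≤ expStarDisc m d := by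
  classical
  have hint := integrable_cubeDisc_comp hy
  calc ∫ P, ∑ x ∈ S, cubeDisc x (y P) (P x) ∂jitterMeasure m d
      = ∫ P, ∑ x, cubeDisc x (y P) (P x) ∂jitterMeasure m d := by
        rw [integral_finsetSum _ fun x _ ↦ hint x, integral_finsetSum _ fun x _ ↦ hint x]
        exact Finset.sum_subset S.subset_univ fun x _ hx ↦ integral_cubeDisc_comp_eq_zero hy hyS hx
    _ ≤ expStarDisc m d := by
        refine integral_mono (integrable_finsetSum _ fun x _ ↦ hint x) integrable_starDisc
          fun P ↦ ?_
        rw [← jdisc_anchoredBox_eq_sum_cubeDisc P fun i ↦ (hy' P i).2.le]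
        exact (le_abs_self _).trans (abs_jdisc_anchoredBox_le_starDisc P (hy' P))

end StarDiscrepancy

section TestCorner

open Set Function

variable {m d : ℕ}

/-- The set of cubes whose `i`-th index lies in `K` and whose other indices are all less than `A`.
The layers of the construction are the slabs with `K` a singleton. -/
def slab (A : ℕ) (i : Fin d) (K : Finset (Fin m)) : Finset (Fin d → Fin m) :=
  Fintype.piFinset (update (fun _ ↦ Finset.univ.filter fun k : Fin m ↦ (k : ℕ) < A) i K)

theorem mem_slab {A : ℕ} {i : Fin d} {K : Finset (Fin m)} {x : Fin d → Fin m} :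
    x ∈ slab A i K ↔ x i ∈ K ∧ ∀ j ≠ i, (x j : ℕ) < A := by
  rw [slab, Fintype.mem_piFinset, forall_update_iff _ fun j S ↦ x j ∈ S]
  simp

theorem card_slab {A : ℕ} (hA : A ≤ m) (i : Fin d) (K : Finset (Fin m)) :
    (slab A i K).card = K.card * A ^ (d - 1) := by
  have hbase : (Finset.univ.filter fun k : Fin m ↦ (k : ℕ) < A).card = A := by
    simp [Fin.card_filter_val_lt, hA]
  rw [slab, Fintype.card_piFinset]
  simp only [apply_update (fun _ ↦ Finset.card), hbase]
  rw [Finset.prod_update_of_mem (Finset.mem_univ i)]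
  simp [Finset.card_sdiff]

theorem slab_subset_slab {A : ℕ} {i : Fin d} {K L : Finset (Fin m)} (h : K ⊆ L) :
    slab A i K ⊆ slab A i L :=
  fun _ hx ↦ mem_slab.2 ((mem_slab.1 hx).imp_left (h ·))

theorem add_one_le_of_mem_slab {A : ℕ} {i : Fin d} {K : Finset (Fin m)} {x : Fin d → Fin m}
    (hx : x ∈ slab A i K) {y : Fin d → ℝ} (hy : ∀ j, A ≤ m * y j) :
    ∀ j ≠ i, (x j : ℝ) + 1 ≤ m * y j :=
  fun j hj ↦ le_trans (by exact_mod_cast (mem_slab.1 hx).2 j hj) (hy j)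

theorem disjoint_slab_singleton (A : ℕ) (i : Fin d) {k l : Fin m} (h : k ≠ l) :
    Disjoint (slab A i {k}) (slab A i {l}) := by
  simp only [Finset.disjoint_left, mem_slab, Finset.mem_singleton]
  grind

theorem disjoint_slab_of_ne {A : ℕ} {K : Finset (Fin m)} (hK : ∀ k ∈ K, A ≤ k) {i j : Fin d}
    (h : i ≠ j) : Disjoint (slab A i K) (slab A j K) := by
  simp only [Finset.disjoint_left, mem_slab]
  exact fun x hi hj ↦ (hj.2 i h).not_ge (hK _ hi.1)

/-- `1` if the point `p` of the cube `x` lies in the lower half of the cube in direction `i`,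
and `-1` otherwise. -/
def halfSign (i : Fin d) (x : Fin d → Fin m) (p : Fin d → ℝ) : ℝ :=
  if m * p i < x i + 1 / 2 then 1 else -1

theorem measurable_halfSign (i : Fin d) (x : Fin d → Fin m) : Measurable (halfSign i x) :=
  .ite (measurableSet_lt (by fun_prop) measurable_const) measurable_const measurable_const

/-- The indices `k ∈ K` of the layers in direction `i` in which the points of the lower halves
of the cubes outnumber those of the upper halves by at least `s`. -/
def goodLayers (A : ℕ) (s : ℝ) (K : Finset (Fin m)) (i : Fin d)
    (P : (Fin d → Fin m) → Fin d → ℝ) : Set (Fin m) :=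
  {k | k ∈ K ∧ s ≤ ∑ x ∈ slab A i {k}, halfSign i x (P x)}

theorem dependsOn_goodLayers (A : ℕ) (s : ℝ) (K : Finset (Fin m)) (i : Fin d) :
    DependsOn (goodLayers A s K i) (slab A i K : Set (Fin d → Fin m)) := by
  intro P Q h
  ext k
  refine and_congr_right fun hk ↦ ?_
  rw [Finset.sum_congr rfl fun x hx ↦ ?_]
  rw [h x (slab_subset_slab (by simpa using hk) hx)]

open scoped Classical in
/-- The midpoint of a grid interval with index in `G`, or the grid point `A / m` if `G` is empty. -/
def cutPoint (A : ℕ) (G : Set (Fin m)) : ℝ :=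
  if h : G.Nonempty then (h.some + 1 / 2) / m else A / m

/-- The corner of the box that tests the discrepancy of `P`: in each direction it cuts the cubes of
a good layer into halves, or leaves out all layers with index at least `A` if none is good. -/
def testCorner (A : ℕ) (s : ℝ) (K : Finset (Fin m)) (P : (Fin d → Fin m) → Fin d → ℝ) :
    Fin d → ℝ :=
  fun i ↦ cutPoint A (goodLayers A s K i P)

theorem dependsOn_testCorner (A : ℕ) (s : ℝ) (K : Finset (Fin m)) :
    DependsOn (testCorner (d := d) A s K)
      (Finset.univ.biUnion fun i ↦ slab A i K : Finset (Fin d → Fin m)) :=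
  fun _ _ h ↦ funext fun i ↦ congrArg (cutPoint A) (dependsOn_goodLayers A s K i fun x hx ↦
    h x (Finset.mem_coe.2 (Finset.mem_biUnion.2 ⟨i, Finset.mem_univ i, hx⟩)))

variable [NeZero m]

theorem integral_halfSign (i : Fin d) (x : Fin d → Fin m) :
    ∫ p, halfSign i x p ∂cubeMeasure x = 0 := by
  have hset : MeasurableSet {p : Fin d → ℝ | m * p i < x i + 1 / 2} :=
    measurableSet_lt (by fun_prop) measurable_const
  have heq : halfSign i x = fun p ↦
      {p : Fin d → ℝ | m * p i < x i + 1 / 2}.indicator (fun _ ↦ (2 : ℝ)) p - 1 := by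
    funext p
    simp only [halfSign, indicator, mem_ofPred_eq]
    split_ifs <;> norm_num
  rw [heq, integral_sub ((integrable_const _).indicator hset) (integrable_const _),
    integral_indicator_const _ hset, cubeMeasure_real_setOf_lt x i (by norm_num) (by norm_num)]
  simp

theorem isRademacherFamily_halfSign (i : Fin d) :
    IsRademacherFamily (fun x P ↦ halfSign i x (P x)) (jitterMeasure m d) where
  measurable x := (measurable_halfSign i x).comp (measurable_pi_apply x)
  indep := iIndepFun_eval_jitterMeasure.comp (halfSign i) (measurable_halfSign i)
  sq_eq_one x P := by unfold halfSign; split_ifs <;> norm_num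
  integral_eq_zero x := by
    rw [jitterMeasure_eq_pi]
    exact (integral_comp_eval (μ := cubeMeasure) (i := x) (f := halfSign i x)
      (measurable_halfSign i x).aestronglyMeasurable).trans (integral_halfSign i x)

theorem mem_anchoredBox_iff_of_mem_jitterCube {x : Fin d → Fin m} {y p : Fin d → ℝ} {i : Fin d}
    (hy : ∀ j ≠ i, x j + 1 ≤ m * y j) (hp : p ∈ jitterCube m d x) :
    p ∈ anchoredBox d y ↔ m * p i < m * y i := by
  have hm : (0 : ℝ) < m := by exact_mod_cast NeZero.pos m
  rw [mem_jitterCube_iff] at hp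
  have hnonneg (j : Fin d) : 0 ≤ p j :=
    nonneg_of_mul_nonneg_right ((Nat.cast_nonneg _).trans (hp j).1) hm
  rw [mem_anchoredBox_iff, mul_lt_mul_iff_right₀ hm]
  refine ⟨fun h ↦ (h i).2, fun h j ↦ ⟨hnonneg j, ?_⟩⟩
  rcases eq_or_ne j i with rfl | hj
  · exact h
  · exact lt_of_mul_lt_mul_left ((hp j).2.trans_le (hy j hj)) hm.le

theorem cubeDisc_eq_ite_sub {x : Fin d → Fin m} {y p : Fin d → ℝ} {i : Fin d}
    (hy : ∀ j ≠ i, x j + 1 ≤ m * y j) (hp : p ∈ jitterCube m d x) :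
    cubeDisc x y p = (if m * p i < m * y i then 1 else 0) - max 0 (min 1 (m * y i - x i)) := by
  have hae : anchoredBox d y =ᵐ[cubeMeasure x]
      {q | m * q i < x i + max 0 (min 1 (m * y i - x i))} := by
    filter_upwards [ae_cubeMeasure_mem_jitterCube x] with q hq
    have hqi := mem_jitterCube_iff.1 hq i
    refine propext ((mem_anchoredBox_iff_of_mem_jitterCube hy hq).trans ?_)
    change _ ↔ m * q i < x i + max 0 (min 1 (m * y i - x i))
    grind
  rw [cubeDisc, measureReal_congr hae, cubeMeasure_real_setOf_lt x i (le_max_left _ _)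
    (max_le zero_le_one (min_le_left _ _))]
  congr 1
  simp [indicator, mem_anchoredBox_iff_of_mem_jitterCube hy hp]

theorem cubeDisc_eq_halfSign_div_two {x : Fin d → Fin m} {y p : Fin d → ℝ} {i : Fin d}
    (hy : ∀ j ≠ i, x j + 1 ≤ m * y j) (hp : p ∈ jitterCube m d x) (hi : m * y i = x i + 1 / 2) :
    cubeDisc x y p = halfSign i x p / 2 := by
  rw [cubeDisc_eq_ite_sub hy hp, hi, halfSign]
  split_ifs <;> norm_num

theorem cubeDisc_eq_zero {x : Fin d → Fin m} {y p : Fin d → ℝ} {i : Fin d}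
    (hy : ∀ j ≠ i, x j + 1 ≤ m * y j) (hp : p ∈ jitterCube m d x)
    (hi : m * y i ≤ x i ∨ x i + 1 ≤ m * y i) : cubeDisc x y p = 0 := by
  have hpi := mem_jitterCube_iff.1 hp i
  rw [cubeDisc_eq_ite_sub hy hp]
  grind

theorem sum_slab_cubeDisc_eq_zero {A : ℕ} {i : Fin d} {K : Finset (Fin m)} (hK : ∀ k ∈ K, A ≤ k)
    {y : Fin d → ℝ} (hy : ∀ j, A ≤ m * y j) (hi : m * y i = A)
    {P : (Fin d → Fin m) → Fin d → ℝ} (hP : ∀ x, P x ∈ jitterCube m d x) :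
    ∑ x ∈ slab A i K, cubeDisc x y (P x) = 0 :=
  Finset.sum_eq_zero fun x hx ↦ cubeDisc_eq_zero (add_one_le_of_mem_slab hx hy) (hP x)
    (.inl (hi.trans_le (by exact_mod_cast hK _ (mem_slab.1 hx).1)))

theorem sum_slab_cubeDisc_eq_sum_halfSign {A : ℕ} {i : Fin d} {K : Finset (Fin m)}
    {y : Fin d → ℝ} (hy : ∀ j, A ≤ m * y j) {k : Fin m} (hk : k ∈ K) (hi : m * y i = k + 1 / 2)
    {P : (Fin d → Fin m) → Fin d → ℝ} (hP : ∀ x, P x ∈ jitterCube m d x) :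
    ∑ x ∈ slab A i K, cubeDisc x y (P x) = (∑ x ∈ slab A i {k}, halfSign i x (P x)) / 2 := by
  rw [Finset.sum_div]
  refine (Finset.sum_subset_zero_on_sdiff (slab_subset_slab (by simpa using hk))
    (fun x hx ↦ ?_) fun x hx ↦ ?_).symm
  · rw [Finset.mem_sdiff] at hx
    have hne : (x i : ℕ) ≠ k := fun h ↦
      hx.2 (mem_slab.2 ⟨by simpa using Fin.ext h, (mem_slab.1 hx.1).2⟩)
    refine cubeDisc_eq_zero (add_one_le_of_mem_slab hx.1 hy) (hP x) ?_
    rcases hne.lt_or_gt with h | h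
    · right
      have : ((x i : ℕ) : ℝ) + 1 ≤ k := by exact_mod_cast h
      linarith
    · left
      have : ((k : ℕ) : ℝ) + 1 ≤ x i := by exact_mod_cast h
      linarith
  · have hxk : x i = k := by simpa using (mem_slab.1 hx).1
    exact (cubeDisc_eq_halfSign_div_two (add_one_le_of_mem_slab hx hy) (hP x)
      (by rw [hi, hxk])).symm

theorem exists_mem_mul_cutPoint_eq (A : ℕ) {G : Set (Fin m)} (h : G.Nonempty) :
    ∃ k ∈ G, m * cutPoint A G = k + 1 / 2 := by
  refine ⟨h.some, h.some_mem, ?_⟩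
  rw [cutPoint, dif_pos h, mul_div_cancel₀ _ (NeZero.ne _)]

theorem mul_cutPoint_eq_of_not_nonempty (A : ℕ) {G : Set (Fin m)} (h : ¬G.Nonempty) :
    m * cutPoint A G = A := by
  rw [cutPoint, dif_neg h, mul_div_cancel₀ _ (NeZero.ne _)]

theorem le_mul_cutPoint {A : ℕ} {G : Set (Fin m)} (hG : ∀ k ∈ G, A ≤ k) :
    A ≤ m * cutPoint A G := by
  by_cases h : G.Nonempty
  · obtain ⟨k, hk, heq⟩ := exists_mem_mul_cutPoint_eq A h
    have : (A : ℝ) ≤ k := by exact_mod_cast hG k hk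
    linarith
  · exact (mul_cutPoint_eq_of_not_nonempty A h).ge

theorem cutPoint_mem_Ico {A : ℕ} (hA : A < m) (G : Set (Fin m)) :
    cutPoint A G ∈ Ico (0 : ℝ) 1 := by
  have hm : (0 : ℝ) < m := by exact_mod_cast NeZero.pos m
  unfold cutPoint
  split_ifs with h
  · have : ((h.some : ℕ) : ℝ) + 1 ≤ m := by exact_mod_cast h.some.2
    exact ⟨by positivity, (div_lt_one hm).2 (by linarith)⟩
  · exact ⟨by positivity, (div_lt_one hm).2 (by exact_mod_cast hA)⟩

theorem measurable_goodLayers (A : ℕ) (s : ℝ) (K : Finset (Fin m)) (i : Fin d) :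
    Measurable (goodLayers A s K i) :=
  measurable_set_iff.2 fun k ↦ measurable_const.and (measurableSet_setOfPred.1
    (measurableSet_le measurable_const
      ((isRademacherFamily_halfSign i).measurable_sum (slab A i {k}))))

theorem measurable_testCorner (A : ℕ) (s : ℝ) (K : Finset (Fin m)) :
    Measurable (testCorner (d := d) A s K) :=
  measurable_pi_iff.2 fun i ↦
    (Measurable.of_discrete (f := cutPoint A)).comp (measurable_goodLayers A s K i)

theorem indicator_le_sum_slab_cubeDisc {A : ℕ} {K : Finset (Fin m)} (hK : ∀ k ∈ K, A ≤ k)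
    (s : ℝ) (i : Fin d) {P : (Fin d → Fin m) → Fin d → ℝ} (hP : ∀ x, P x ∈ jitterCube m d x) :
    {P | (goodLayers A s K i P).Nonempty}.indicator (fun _ ↦ s / 2) P ≤
      ∑ x ∈ slab A i K, cubeDisc x (testCorner A s K P) (P x) := by
  have hy (j : Fin d) : A ≤ m * testCorner A s K P j := le_mul_cutPoint fun k hk ↦ hK k hk.1
  simp only [indicator, mem_ofPred_eq]
  split_ifs with h
  · obtain ⟨k, ⟨hk, hs⟩, hi⟩ := exists_mem_mul_cutPoint_eq A h
    rw [sum_slab_cubeDisc_eq_sum_halfSign hy hk hi hP]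
    linarith
  · exact (sum_slab_cubeDisc_eq_zero hK hy (mul_cutPoint_eq_of_not_nonempty A h) hP).ge

theorem sum_indicator_le_sum_cubeDisc {A : ℕ} {K : Finset (Fin m)} (hK : ∀ k ∈ K, A ≤ k)
    (s : ℝ) {P : (Fin d → Fin m) → Fin d → ℝ} (hP : ∀ x, P x ∈ jitterCube m d x) :
    ∑ i : Fin d, {P | (goodLayers A s K i P).Nonempty}.indicator (fun _ ↦ s / 2) P ≤
      ∑ x ∈ Finset.univ.biUnion fun i ↦ slab A i K, cubeDisc x (testCorner A s K P) (P x) := by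
  rw [Finset.sum_biUnion fun i _ j _ hij ↦ disjoint_slab_of_ne hK hij]
  exact Finset.sum_le_sum fun i _ ↦ indicator_le_sum_slab_cubeDisc hK s i hP

theorem mul_le_expStarDisc_of_le_measureReal {A : ℕ} (hA : A < m) {K : Finset (Fin m)}
    (hK : ∀ k ∈ K, A ≤ k) {s p : ℝ} (hs : 0 ≤ s)
    (hp : ∀ i : Fin d, p ≤ (jitterMeasure m d).real {P | (goodLayers A s K i P).Nonempty}) :
    d * (p * (s / 2)) ≤ expStarDisc m d := by
  have hset (i : Fin d) : MeasurableSet {P | (goodLayers (m := m) A s K i P).Nonempty} :=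
    measurable_goodLayers A s K i 
      (MeasurableSet.of_discrete (s := {G : Set (Fin m) | G.Nonempty}))
  have hint (i : Fin d) : Integrable ({P | (goodLayers (m := m) A s K i P).Nonempty}.indicator
      fun _ ↦ s / 2) (jitterMeasure m d) := (integrable_const _).indicator (hset i)
  calc d * (p * (s / 2))
      = ∑ i : Fin d, p * (s / 2) := by simp
    _ ≤ ∑ i : Fin d, (jitterMeasure m d).real {P | (goodLayers A s K i P).Nonempty} * (s / 2) :=
        Finset.sum_le_sum fun i _ ↦ mul_le_mul_of_nonneg_right (hp i) (by positivity)
    _ = ∫ P, ∑ i : Fin d, {P | (goodLayers A s K i P).Nonempty}.indicator (fun _ ↦ s / 2) P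
          ∂jitterMeasure m d := by
        rw [integral_finsetSum _ fun i _ ↦ hint i]
        exact Finset.sum_congr rfl fun i _ ↦ (integral_indicator_const _ (hset i)).symm
    _ ≤ ∫ P, ∑ x ∈ Finset.univ.biUnion fun i ↦ slab A i K,
          cubeDisc x (testCorner A s K P) (P x) ∂jitterMeasure m d := by
        refine integral_mono_ae (integrable_finsetSum _ fun i _ ↦ hint i)
          (integrable_finsetSum _ fun x _ ↦
            integrable_cubeDisc_comp (measurable_testCorner A s K) x) ?_
        filter_upwards [ae_jitterMeasure_mem_jitterCube] with P hP
        exact sum_indicator_le_sum_cubeDisc hK s hP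
    _ ≤ expStarDisc m d := integral_sum_cubeDisc_le_expStarDisc (measurable_testCorner A s K)
        (fun P i ↦ cutPoint_mem_Ico hA (goodLayers A s K i P)) (dependsOn_testCorner A s K)

end TestCorner

section LowerBound

variable {m d : ℕ}

theorem mul_le_expStarDisc_of_log_lt [NeZero m] {M : ℕ} (hM : M ≠ 0) (hMm : M ≤ m)
    (hlog : Nat.log 16 M < (m - M) ^ (d - 1)) :
    d * (1 / 17 * (√((m - M) ^ (d - 1) * (1 + log M) / 200) / 2)) ≤ expStarDisc m d := by
  have hlt : m - M < m := by have := NeZero.pos m; lia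
  set K := Finset.Ici (⟨m - M, hlt⟩ : Fin m)
  have hcard : K.card = M := by simp [K, Fin.card_Ici, Nat.sub_sub_self hMm]
  have hK : K.Nonempty := Finset.card_ne_zero.1 (hcard ▸ hM)
  refine mul_le_expStarDisc_of_le_measureReal hlt (K := K)
    (fun k hk ↦ Fin.le_def.1 (Finset.mem_Ici.1 hk)) (sqrt_nonneg _) fun i ↦ ?_
  have hexists := (isRademacherFamily_halfSign i).one_seventeenth_le_measureReal_exists_sqrt_le_sum
    (fun k l ↦ disjoint_slab_singleton (m - M) i) hK
    (n := (m - M) ^ (d - 1))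
    (fun k _ ↦ by simp [card_slab hlt.le]) (by simpa [hcard] using hlog)
  simpa [goodLayers, Set.Nonempty, hcard, Nat.cast_sub hMm] using hexists

theorem pow_le_exp_one_mul_sub_div_pow (hd : 2 ≤ d) (hdm : d ≤ m) :
    (m : ℝ) ^ (d - 1) ≤ exp 1 * (m - (m / d : ℕ)) ^ (d - 1) := by
  obtain ⟨e, rfl⟩ : ∃ e, d = e + 1 := ⟨d - 1, by lia⟩
  have he : (0 : ℝ) < e := by exact_mod_cast (by lia : 0 < e)
  have hdiv : ((m / (e + 1) : ℕ) : ℝ) * (e + 1) ≤ m := by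
    exact_mod_cast Nat.div_mul_le_self m (e + 1)
  have hbase : (m : ℝ) ≤ (1 + (e : ℝ)⁻¹) * (m - (m / (e + 1) : ℕ)) := by
    rw [← one_div, one_add_div he.ne', div_mul_eq_mul_div, le_div_iff₀ he]
    linarith
  have hsub : (0 : ℝ) ≤ m - (m / (e + 1) : ℕ) := by
    rw [sub_nonneg]; exact_mod_cast Nat.div_le_self m (e + 1)
  calc (m : ℝ) ^ e ≤ ((1 + (e : ℝ)⁻¹) * (m - (m / (e + 1) : ℕ))) ^ e := by gcongr
    _ ≤ exp 1 * (m - (m / (e + 1) : ℕ)) ^ e := by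
        rw [mul_pow]
        gcongr
        exact one_add_inv_pow_le_exp

theorem one_add_log_div_le (hd : d ≠ 0) (hdm : d ≤ m) :
    1 + log (m / d) ≤ 2 * (1 + log (m / d : ℕ)) := by
  have hd' : (0 : ℝ) < d := by exact_mod_cast Nat.pos_of_ne_zero hd
  have hM : (1 : ℝ) ≤ (m / d : ℕ) := by
    exact_mod_cast (Nat.one_le_div_iff (Nat.pos_of_ne_zero hd)).2 hdm
  have hm : (d : ℝ) ≤ m := by exact_mod_cast hdm
  have hlt : (m : ℝ) / d ≤ 2 * (m / d : ℕ) := by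
    have := Nat.lt_floor_add_one ((m : ℝ) / d)
    rw [Nat.floor_div_eq_div] at this
    linarith
  calc 1 + log (m / d) ≤ 1 + log (2 * (m / d : ℕ)) := by
        have : (0 : ℝ) < m / d := div_pos (hd'.trans_le hm) hd'
        gcongr
    _ ≤ 2 * (1 + log (m / d : ℕ)) := by
        rw [log_mul two_ne_zero (by positivity)]
        linarith [log_two_lt_d9, log_nonneg hM]

theorem log_div_lt_sub_div_pow (hd : 2 ≤ d) (hdm : d ≤ m) :
    Nat.log 16 (m / d) < (m - m / d) ^ (d - 1) := by
  have hM : m / d ≠ 0 := (Nat.div_pos hdm (by lia)).ne'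
  have hle : m / d ≤ m - m / d := by
    have := Nat.mul_le_mul_left (m / d) hd
    have := Nat.div_mul_le_self m d
    lia
  exact ((Nat.log_lt_self 16 hM).trans_le hle).trans_le (Nat.le_self_pow (by lia) _)

theorem sqrt_mul_sqrt_le (hd : 2 ≤ d) (hdm : d ≤ m) :
    √(d * m ^ d) * √((1 + log (m / d)) / (m / d)) ≤
      35 * d * √((m - (m / d : ℕ)) ^ (d - 1) * (1 + log (m / d : ℕ)) / 200) := by
  have hm : (0 : ℝ) < m := by exact_mod_cast (by lia : 0 < m)
  have hd' : (0 : ℝ) < d := by exact_mod_cast (by lia : 0 < d)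
  have hlog : 0 ≤ log (m / d) := log_nonneg ((one_le_div hd').2 (by exact_mod_cast hdm))
  have hsub : (0 : ℝ) ≤ m - (m / d : ℕ) := by
    rw [sub_nonneg]; exact_mod_cast Nat.div_le_self m d
  have hpow : (m : ℝ) ^ (d - 1) ≤ 3 * (m - (m / d : ℕ)) ^ (d - 1) :=
    (pow_le_exp_one_mul_sub_div_pow hd hdm).trans (by gcongr; linarith [exp_one_lt_d9])
  rw [← sqrt_mul (by positivity), sqrt_le_left (by positivity), mul_pow, sq_sqrt (by positivity)]
  calc d * m ^ d * ((1 + log (m / d)) / (m / d))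
      = d ^ 2 * (m ^ (d - 1) * (1 + log (m / d))) := by
        rw [← pow_sub_one_mul (by lia : d ≠ 0)]
        field_simp
    _ ≤ d ^ 2 * (3 * (m - (m / d : ℕ)) ^ (d - 1) * (2 * (1 + log (m / d : ℕ)))) := by
        gcongr
        exact one_add_log_div_le (by lia) hdm
    _ ≤ (35 * d) ^ 2 * ((m - (m / d : ℕ)) ^ (d - 1) * (1 + log (m / d : ℕ)) / 200) := by
        nlinarith [show 0 ≤ (d : ℝ) ^ 2 * ((m - (m / d : ℕ)) ^ (d - 1) * (1 + log (m / d : ℕ)))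
          by positivity]

end LowerBound

/-- There is a constant `C > 0` such that for all integers `m, d ≥ 2` with `m ≥ d`, the expected
star discrepancy of a jittered sampling point set of `N = m^d` points in `[0,1)^d` satisfies
`E[D*(P)] ≥ C·√(d·m^d)·√((1 + log(m/d))/(m/d))`. -/
theorem jittered_sampling_lower_bound :
    ∃ C : ℝ, 0 < C ∧
      ∀ m d : ℕ, 2 ≤ m → 2 ≤ d → d ≤ m →
        C * Real.sqrt ((d : ℝ) * (m : ℝ) ^ d) *
            Real.sqrt ((1 + Real.log ((m : ℝ) / d)) / ((m : ℝ) / d))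
          ≤ expStarDisc m d := by
  refine ⟨1 / 1190, by norm_num, fun m d _ hd hdm ↦ ?_⟩
  have : NeZero m := ⟨by lia⟩
  have hnumeric := sqrt_mul_sqrt_le hd hdm
  have hdisc := mul_le_expStarDisc_of_log_lt (Nat.div_pos hdm (by lia)).ne' (Nat.div_le_self m d)
    (log_div_lt_sub_div_pow hd hdm)
  rw [mul_assoc]
  linarith
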